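/- Let 1 < p < 2. A linear operator T : ℝ² → ℝ² with operator norm ‖T‖ = 1 from ℓ^p_2 to ℓ²_2 is an extreme point of the closed unit ball of L(ℓ^p_2, ℓ²_2) if and only if either (a) T attains its norm on two linearly independent vectors, or (b) there exist a vector x = (x1,x2) with |x1|^p = |x2|^p = 1/2, a Euclidean unit vector y, and s = ±√(p−1)·2^{(2−p)/p}, such that T = x^{p−1}⊗y + s·x^o⊗y^o. -/

import Mathlib

/-!
The proof studies a contraction `T` at a unit vector `x` of `ℓ^p` with `‖T x‖ = 1`. First-order
optimality at `x` forces `T = x^{p-1} ⊗ y + s x^o ⊗ y^o` with `y = T x`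
(`exists_eq_normalForm`), and then `‖T z‖² = ⟨x^{p-1}, z⟩² + s² ⟨x^o, z⟩²`. In a convex
decomposition of `T`, strict convexity of the Euclidean norm makes both components agree with `T`
at every vector where `T` attains its norm. If there are two independent such vectors, `T` is
extreme. If there is only the direction of `x`, both components are again in normal form at `x`
with the same `y`, so `T` is extreme exactly when `|s|` cannot be increased inside the unit ball.

On the line `x + t u` tangent to the `ℓ^p` sphere at `x`, the condition `‖T‖ ≤ 1` says
`1 + s² t² ≤ ‖x + t u‖_p²`. When both coordinates of `x` are nonzero, a Taylor expansion of
`‖x + t u‖_p^p` gives two facts.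
* Second order: `s² ≤ (p - 1) |x₁ x₂|^{p-2}`. On a diagonal vector the right side is
  `((p - 1)^{1/2} 2^{(2-p)/p})²`, so the operators in the second alternative have the largest
  possible `|s|` and are extreme (`extreme_of_diag`).
* Third order: equality forces `|x₁| = |x₂|`, since otherwise the cubic term changes sign
  (`normalForm_mem_ball_bound`).

Conversely, if the norm is attained only in the direction of `x` and the second-order bound is
strict, or if a coordinate of `x` vanishes (where `|t|^p` dominates `t²`), then a compactness
argument on the sphere lets `|s|` increase (`exists_larger_param`), so `T` is not extreme.
-/

noncomputable section

/-- The ℓ^r norm on ℝ². -/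
def pnorm (r : ℝ) (z : ℝ × ℝ) : ℝ := (|z.1| ^ r + |z.2| ^ r) ^ (1 / r)

/-- Apply a 2×2 real matrix, viewed as a linear operator ℝ² → ℝ², to a vector. -/
def app (A : Matrix (Fin 2) (Fin 2) ℝ) (z : ℝ × ℝ) : ℝ × ℝ :=
  (A 0 0 * z.1 + A 0 1 * z.2, A 1 0 * z.1 + A 1 1 * z.2)

/-- Operator norm from ℓ^p_2 to ℓ^q_2. -/
def opNorm (p q : ℝ) (A : Matrix (Fin 2) (Fin 2) ℝ) : ℝ :=
  sSup {c : ℝ | ∃ z : ℝ × ℝ, pnorm p z = 1 ∧ c = pnorm q (app A z)}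

/-- Closed unit ball of L(ℓ^p_2, ℓ^q_2). -/
def unitBall (p q : ℝ) : Set (Matrix (Fin 2) (Fin 2) ℝ) := {A | opNorm p q A ≤ 1}

/-- The rank-one operator u ⊗ v : z ↦ (u·z)·v. -/
def tensor (u v : ℝ × ℝ) : Matrix (Fin 2) (Fin 2) ℝ :=
  !![v.1 * u.1, v.1 * u.2; v.2 * u.1, v.2 * u.2]

/-- Signed power of a vector: (sgn z1 |z1|^r, sgn z2 |z2|^r). -/
def spow (z : ℝ × ℝ) (r : ℝ) : ℝ × ℝ :=
  (Real.sign z.1 * |z.1| ^ r, Real.sign z.2 * |z.2| ^ r)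

/-- Rotation: z^o = (−z2, z1). -/
def rot (z : ℝ × ℝ) : ℝ × ℝ := (-z.2, z.1)

/-! ### Norms and the unit ball -/

/-- The `p`-th power of the `ℓ^p` norm. -/
def powSum (p : ℝ) (z : ℝ × ℝ) : ℝ := |z.1| ^ p + |z.2| ^ p

/-- The quadratic form `z ↦ ‖A z‖²` with the Euclidean norm. -/
def quad (A : Matrix (Fin 2) (Fin 2) ℝ) (z : ℝ × ℝ) : ℝ := (app A z).1 ^ 2 + (app A z).2 ^ 2

lemma powSum_nonneg (p : ℝ) (z : ℝ × ℝ) : 0 ≤ powSum p z := by unfold powSum; positivity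

lemma quad_nonneg (A : Matrix (Fin 2) (Fin 2) ℝ) (z : ℝ × ℝ) : 0 ≤ quad A z := by
  unfold quad; positivity

lemma pnorm_nonneg (r : ℝ) (z : ℝ × ℝ) : 0 ≤ pnorm r z := by unfold pnorm; positivity

lemma pnorm_two_sq (z : ℝ × ℝ) : pnorm 2 z ^ 2 = z.1 ^ 2 + z.2 ^ 2 := by
  rw [pnorm, ← Real.sqrt_eq_rpow, Real.sq_sqrt (by positivity)]
  simp

lemma pnorm_sq {p : ℝ} (z : ℝ × ℝ) : pnorm p z ^ 2 = powSum p z ^ (2 / p) := by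
  rw [pnorm, ← Real.rpow_natCast, ← Real.rpow_mul (by positivity), powSum]
  congr 1
  push_cast
  ring

lemma pnorm_eq_one_iff {p : ℝ} (hp : 1 < p) (z : ℝ × ℝ) : pnorm p z = 1 ↔ powSum p z = 1 := by
  change (powSum p z) ^ (1 / p) = 1 ↔ _
  have h := Real.rpow_left_inj (powSum_nonneg p z) zero_le_one
    (show 1 / p ≠ 0 from one_div_ne_zero (by linarith))
  rwa [Real.one_rpow] at h

lemma pnorm_two_app_eq_iff {p : ℝ} (A : Matrix (Fin 2) (Fin 2) ℝ) (z : ℝ × ℝ) :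
    pnorm 2 (app A z) = pnorm p z ↔ quad A z = powSum p z ^ (2 / p) := by
  rw [← sq_eq_sq₀ (pnorm_nonneg _ _) (pnorm_nonneg _ _), pnorm_two_sq, pnorm_sq, quad]

lemma quad_smul (A : Matrix (Fin 2) (Fin 2) ℝ) (c : ℝ) (z : ℝ × ℝ) :
    quad A (c • z) = c ^ 2 * quad A z := by
  simp only [quad, app, Prod.smul_fst, Prod.smul_snd, smul_eq_mul]; ring

lemma powSum_smul (p c : ℝ) (z : ℝ × ℝ) : powSum p (c • z) = |c| ^ p * powSum p z := by
  simp only [powSum, Prod.smul_fst, Prod.smul_snd, smul_eq_mul, abs_mul]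
  rw [Real.mul_rpow (abs_nonneg _) (abs_nonneg _), Real.mul_rpow (abs_nonneg _) (abs_nonneg _)]
  ring

lemma powSum_pos (p : ℝ) {z : ℝ × ℝ} (hz : z ≠ 0) : 0 < powSum p z := by
  have : z.1 ≠ 0 ∨ z.2 ≠ 0 := by
    by_contra! h
    exact hz (Prod.ext h.1 h.2)
  unfold powSum
  rcases this with h | h
  · have := Real.rpow_pos_of_pos (abs_pos.2 h) p
    positivity
  · have := Real.rpow_pos_of_pos (abs_pos.2 h) p
    positivity

lemma continuous_powSum {p : ℝ} (hp : 1 < p) : Continuous (powSum p) := by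
  unfold powSum
  exact ((continuous_fst.abs).rpow_const fun _ => Or.inr (by linarith)).add
    ((continuous_snd.abs).rpow_const fun _ => Or.inr (by linarith))

lemma continuous_quad (A : Matrix (Fin 2) (Fin 2) ℝ) : Continuous (quad A) := by
  unfold quad app; fun_prop

lemma isCompact_powSum_sphere {p : ℝ} (hp : 1 < p) : IsCompact {z : ℝ × ℝ | powSum p z = 1} := by
  refine Metric.isCompact_of_isClosed_isBounded
    (isClosed_singleton.preimage (continuous_powSum hp)) ?_
  refine (Metric.isBounded_closedBall (x := (0 : ℝ × ℝ)) (r := 1)).subset fun z hz => ?_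
  have hz : |z.1| ^ p + |z.2| ^ p = 1 := hz
  have key : ∀ t : ℝ, |t| ^ p ≤ 1 → |t| ≤ 1 := fun t ht => by
    by_contra! h
    exact absurd ht (not_le.2 (Real.one_lt_rpow h (by linarith)))
  have h1 : 0 ≤ |z.1| ^ p := by positivity
  have h2 : 0 ≤ |z.2| ^ p := by positivity
  rw [mem_closedBall_zero_iff, Prod.norm_def]
  exact max_le (key _ (by linarith)) (key _ (by linarith))

lemma isCompact_values {p : ℝ} (hp : 1 < p) (A : Matrix (Fin 2) (Fin 2) ℝ) :
    IsCompact {c : ℝ | ∃ z : ℝ × ℝ, pnorm p z = 1 ∧ c = pnorm 2 (app A z)} := by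
  have hc : Continuous fun z => Real.sqrt (quad A z) := (continuous_quad A).sqrt
  convert (isCompact_powSum_sphere hp).image hc using 1
  ext c
  simp only [Set.mem_ofPred_eq, Set.mem_image, pnorm_eq_one_iff hp]
  refine exists_congr fun z => and_congr_right fun _ => ?_
  rw [show quad A z = pnorm 2 (app A z) ^ 2 from (pnorm_two_sq _).symm,
    Real.sqrt_sq (pnorm_nonneg _ _)]
  exact eq_comm

lemma values_nonempty {p : ℝ} (hp : 1 < p) (A : Matrix (Fin 2) (Fin 2) ℝ) :
    {c : ℝ | ∃ z : ℝ × ℝ, pnorm p z = 1 ∧ c = pnorm 2 (app A z)}.Nonempty := by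
  refine ⟨_, (1, 0), ?_, rfl⟩
  rw [pnorm_eq_one_iff hp, powSum]
  simp [Real.zero_rpow (show p ≠ 0 by linarith)]

lemma mem_ball_iff {p : ℝ} (hp : 1 < p) (A : Matrix (Fin 2) (Fin 2) ℝ) :
    A ∈ unitBall p 2 ↔ ∀ z, powSum p z = 1 → quad A z ≤ 1 := by
  rw [unitBall, Set.mem_ofPred_eq, opNorm,
    csSup_le_iff (isCompact_values hp A).bddAbove (values_nonempty hp A)]
  constructor
  · intro h z hz
    have := h _ ⟨z, (pnorm_eq_one_iff hp z).2 hz, rfl⟩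
    rw [quad, ← pnorm_two_sq]
    exact pow_le_one₀ (pnorm_nonneg _ _) this
  · rintro h _ ⟨z, hz, rfl⟩
    have := h z ((pnorm_eq_one_iff hp z).1 hz)
    rw [quad, ← pnorm_two_sq] at this
    exact (sq_le_one_iff₀ (pnorm_nonneg _ _)).1 this

lemma exists_attain {p : ℝ} (hp : 1 < p) {A : Matrix (Fin 2) (Fin 2) ℝ} (hA : opNorm p 2 A = 1) :
    ∃ x, powSum p x = 1 ∧ quad A x = 1 := by
  obtain ⟨x, hx, h⟩ := (isCompact_values hp A).sSup_mem (values_nonempty hp A)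
  refine ⟨x, (pnorm_eq_one_iff hp x).1 hx, ?_⟩
  have h' : pnorm 2 (app A x) = 1 := h.symm.trans hA
  rw [quad, ← pnorm_two_sq, h', one_pow]

lemma quad_le {p : ℝ} (hp : 1 < p) {A : Matrix (Fin 2) (Fin 2) ℝ} (hA : A ∈ unitBall p 2)
    (z : ℝ × ℝ) : quad A z ≤ powSum p z ^ (2 / p) := by
  rcases eq_or_ne z 0 with rfl | hz
  · have : quad A 0 = 0 := by simp [quad, app]
    rw [this]
    exact Real.rpow_nonneg (powSum_nonneg _ _) _
  have hP := powSum_pos p hz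
  set c := powSum p z ^ (1 / p) with hc
  have hc0 : 0 < c := Real.rpow_pos_of_pos hP _
  have hcp : c ^ p = powSum p z := by
    rw [hc, ← Real.rpow_mul hP.le, one_div_mul_cancel (by linarith), Real.rpow_one]
  have h1 : powSum p (c⁻¹ • z) = 1 := by
    rw [powSum_smul, abs_of_pos (inv_pos.2 hc0), Real.inv_rpow hc0.le, hcp,
      inv_mul_cancel₀ hP.ne']
  have h2 := (mem_ball_iff hp A).1 hA _ h1
  rw [quad_smul] at h2
  have h3 : powSum p z ^ (2 / p) = c ^ 2 := (pnorm_sq z).symm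
  rw [h3]
  field_simp at h2
  exact h2

lemma quad_rpow_le {p : ℝ} (hp : 1 < p) {A : Matrix (Fin 2) (Fin 2) ℝ} (hA : A ∈ unitBall p 2)
    (z : ℝ × ℝ) : quad A z ^ (p / 2) ≤ powSum p z := by
  have h := Real.rpow_le_rpow (quad_nonneg A z) (quad_le hp hA z) (show 0 ≤ p / 2 by linarith)
  rwa [← Real.rpow_mul (powSum_nonneg _ _), show 2 / p * (p / 2) = 1 by field_simp,
    Real.rpow_one] at h

/-- Strict convexity of the Euclidean norm. -/
lemma app_eq_of_convexComb {A B : Matrix (Fin 2) (Fin 2) ℝ} {a b r : ℝ} (ha : 0 < a) (hb : 0 < b)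
    (hab : a + b = 1) {z : ℝ × ℝ} (hA : quad A z ≤ r) (hB : quad B z ≤ r)
    (hT : quad (a • A + b • B) z = r) : app A z = app B z := by
  have key : quad (a • A + b • B) z = a * quad A z + b * quad B z - a * b *
      (((app A z).1 - (app B z).1) ^ 2 + ((app A z).2 - (app B z).2) ^ 2) := by
    obtain rfl : b = 1 - a := by linarith
    simp only [quad, app, Matrix.add_apply, Matrix.smul_apply, smul_eq_mul]
    ring
  have hle : a * b * (((app A z).1 - (app B z).1) ^ 2 + ((app A z).2 - (app B z).2) ^ 2) ≤ 0 := by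
    have h1 := mul_le_mul_of_nonneg_left hA ha.le
    have h2 := mul_le_mul_of_nonneg_left hB hb.le
    have h3 : a * r + b * r = r := by rw [← add_mul, hab, one_mul]
    linarith
  have h0 := nonpos_of_mul_nonpos_right hle (mul_pos ha hb)
  have e1 := sq_nonneg ((app A z).1 - (app B z).1)
  have e2 := sq_nonneg ((app A z).2 - (app B z).2)
  exact Prod.ext (by nlinarith) (by nlinarith)

lemma linearIndependent_pair {z w : ℝ × ℝ} :
    LinearIndependent ℝ ![z, w] ↔ z.1 * w.2 - z.2 * w.1 ≠ 0 := by
  rw [LinearIndependent.pair_iff]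
  constructor
  · intro h h0
    have h1 := h w.2 (-z.2) (Prod.ext (by simp; linarith) (by simp; ring))
    have h2 := h w.1 (-z.1) (Prod.ext (by simp; ring) (by simp; linarith))
    have h3 := h 1 1 (Prod.ext (by simp; linarith) (by simp; linarith))
    exact one_ne_zero h3.1
  · intro h s t hst
    have h1 : s * z.1 + t * w.1 = 0 := by simpa using congrArg Prod.fst hst
    have h2 : s * z.2 + t * w.2 = 0 := by simpa using congrArg Prod.snd hst
    constructor
    · refine (mul_eq_zero.1 ?_).resolve_right h
      linear_combination w.2 * h1 - w.1 * h2
    · refine (mul_eq_zero.1 ?_).resolve_right h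
      linear_combination -z.2 * h1 + z.1 * h2

/-- An operator is determined by its values on two linearly independent vectors. -/
lemma eq_of_app_eq {A B : Matrix (Fin 2) (Fin 2) ℝ} {z w : ℝ × ℝ}
    (h : z.1 * w.2 - z.2 * w.1 ≠ 0) (hz : app A z = app B z) (hw : app A w = app B w) :
    A = B := by
  simp only [app, Prod.mk.injEq] at hz hw
  obtain ⟨z1, z2⟩ := hz
  obtain ⟨w1, w2⟩ := hw
  ext i j
  rw [← sub_eq_zero]
  refine (mul_eq_zero.1 ?_).resolve_right h
  fin_cases i <;> fin_cases j <;> simp only [Fin.zero_eta, Fin.mk_one]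
  · linear_combination w.2 * z1 - z.2 * w1
  · linear_combination -w.1 * z1 + z.1 * w1
  · linear_combination w.2 * z2 - z.2 * w2
  · linear_combination -w.1 * z2 + z.1 * w2

/-! ### Expansions at the norm-attaining vector -/

lemma taylor3 (p : ℝ) : (fun w : ℝ => (1 + w) ^ p -
    (1 + p * w + p * (p - 1) / 2 * w ^ 2 + p * (p - 1) * (p - 2) / 6 * w ^ 3))
    =O[nhds 0] fun w => w ^ 4 := by
  have h := (Real.one_add_rpow_hasFPowerSeriesAt_zero (a := p)).isBigO_sub_partialSum_pow 4
  simp only [zero_add, FormalMultilinearSeries.partialSum, Finset.sum_range_succ,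
    Finset.sum_range_zero, binomialSeries] at h
  simp [Ring.choose_eq_smul, descPochhammer, Polynomial.smeval_mul,
    Polynomial.smeval_sub, Nat.factorial] at h
  refine (h.congr_left fun y => ?_).trans (Asymptotics.isBigO_of_le _ fun y => ?_)
  · ring
  · simp

/-! ### Normal form of a contraction at a norm-attaining vector -/

/-- The direction tangent to the `ℓ^p` sphere at `x`. -/
def tangent (p : ℝ) (x : ℝ × ℝ) : ℝ × ℝ := rot (spow x (p - 1))

/-- The operator `x^{p-1} ⊗ y + s x^o ⊗ y^o`: it sends `x` to `y`, and the tangent direction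
at `x` to `s y^o`, when `x` is a unit vector of `ℓ^p`. -/
def normalForm (p : ℝ) (x y : ℝ × ℝ) (s : ℝ) : Matrix (Fin 2) (Fin 2) ℝ :=
  tensor (spow x (p - 1)) y + s • tensor (rot x) (rot y)

lemma sign_mul_rpow {p : ℝ} (hp : 1 < p) (a : ℝ) : Real.sign a * |a| ^ (p - 1) * a = |a| ^ p := by
  rcases eq_or_ne a 0 with rfl | ha
  · simp [Real.zero_rpow (show p ≠ 0 by linarith)]
  · have h : |a| ^ p = |a| ^ (p - 1) * |a| := by
      rw [← Real.rpow_add_one (abs_pos.2 ha).ne']; congr 1; ring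
    rw [h]
    rcases lt_or_gt_of_ne ha with h0 | h0
    · rw [Real.sign_of_neg h0, abs_of_neg h0]; ring
    · rw [Real.sign_of_pos h0, abs_of_pos h0]; ring

lemma rpow_sub_two_mul (p a : ℝ) :
    |a| ^ (p - 2) * a = Real.sign a * |a| ^ (p - 1) := by
  rcases eq_or_ne a 0 with rfl | ha
  · simp
  · have h : |a| ^ (p - 1) = |a| ^ (p - 2) * |a| := by
      rw [← Real.rpow_add_one (abs_pos.2 ha).ne']; congr 1; ring
    rw [h]
    rcases lt_or_gt_of_ne ha with h0 | h0
    · rw [Real.sign_of_neg h0, abs_of_neg h0]; ring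
    · rw [Real.sign_of_pos h0, abs_of_pos h0]; ring

lemma spow_dot {p : ℝ} (hp : 1 < p) (x : ℝ × ℝ) :
    (spow x (p - 1)).1 * x.1 + (spow x (p - 1)).2 * x.2 = powSum p x := by
  simp only [spow, sign_mul_rpow hp, powSum]

/-- First-order optimality: along the tangent direction at `x`, `‖·‖_p` is stationary, so
the function `‖·‖_p^p - ‖A ·‖^p`, which is minimal at `x`, forces `A` to send the
tangent direction to a vector orthogonal to `A x`. -/
lemma app_tangent_orthogonal {p : ℝ} (hp : 1 < p) {A : Matrix (Fin 2) (Fin 2) ℝ}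
    (hA : A ∈ unitBall p 2) {x : ℝ × ℝ} (hx : powSum p x = 1) (hAx : quad A x = 1) :
    (app A x).1 * (app A (tangent p x)).1 + (app A x).2 * (app A (tangent p x)).2 = 0 := by
  set u := tangent p x with hu
  set c := (app A x).1 * (app A u).1 + (app A x).2 * (app A u).2 with hc
  have hq : ∀ t : ℝ, quad A (x + t • u) = 1 + 2 * c * t + quad A u * t ^ 2 := fun t => by
    rw [← hAx, hc]
    simp only [quad, app, Prod.fst_add, Prod.snd_add, Prod.smul_fst, Prod.smul_snd, smul_eq_mul]
    ring
  have hmin : IsLocalMin (fun t : ℝ => powSum p (x + t • u) - quad A (x + t • u) ^ (p / 2)) 0 := by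
    refine Filter.Eventually.of_forall fun t => ?_
    have := quad_rpow_le hp hA (x + t • u)
    simp only [zero_smul, add_zero, hx, hAx, Real.one_rpow, sub_self]
    linarith
  have d1 : HasDerivAt (fun t : ℝ => powSum p (x + t • u))
      (p * |x.1| ^ (p - 2) * x.1 * u.1 + p * |x.2| ^ (p - 2) * x.2 * u.2) 0 := by
    have e : ∀ a b : ℝ, HasDerivAt (fun t : ℝ => |a + t * b| ^ p) (p * |a| ^ (p - 2) * a * b) 0 := by
      intro a b
      have h1 : HasDerivAt (fun t : ℝ => a + t * b) b 0 := by
        simpa using ((hasDerivAt_id (0 : ℝ)).mul_const b).const_add a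
      have h2 := hasDerivAt_abs_rpow (a + 0 * b) hp
      have h3 := h2.comp (0 : ℝ) h1
      simpa [Function.comp_def] using h3
    exact (e x.1 u.1).add (e x.2 u.2)
  have d2 : HasDerivAt (fun t : ℝ => quad A (x + t • u) ^ (p / 2)) (2 * c * (p / 2)) 0 := by
    have h1 : HasDerivAt (fun t : ℝ => quad A (x + t • u)) (2 * c) 0 := by
      rw [show (fun t : ℝ => quad A (x + t • u)) = fun t => 1 + 2 * c * t + quad A u * t ^ 2 from
        funext hq]
      have := (((hasDerivAt_id' (0 : ℝ)).const_mul (2 * c)).const_add 1).fun_add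
        (((hasDerivAt_id' (0 : ℝ)).fun_pow 2).const_mul (quad A u))
      simpa using this
    have := h1.rpow_const (p := p / 2) (Or.inl (by simp [hAx]))
    simpa [hAx] using this
  have h0 := hmin.hasDerivAt_eq_zero (d1.sub d2)
  have h1 : p * |x.1| ^ (p - 2) * x.1 * u.1 + p * |x.2| ^ (p - 2) * x.2 * u.2 = 0 := by
    have e1 := rpow_sub_two_mul p x.1
    have e2 := rpow_sub_two_mul p x.2
    have f1 : u.1 = -(Real.sign x.2 * |x.2| ^ (p - 1)) := rfl
    have f2 : u.2 = Real.sign x.1 * |x.1| ^ (p - 1) := rfl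
    rw [f1, f2]
    linear_combination (-p * (Real.sign x.2 * |x.2| ^ (p - 1))) * e1 +
      (p * (Real.sign x.1 * |x.1| ^ (p - 1))) * e2
  rw [h1] at h0
  have h2 : p * c = 0 := by linarith
  exact (mul_eq_zero.1 h2).resolve_left (by linarith)

/-- A contraction attaining its norm at `x` is in normal form at `x`. -/
lemma exists_eq_normalForm {p : ℝ} (hp : 1 < p) {A : Matrix (Fin 2) (Fin 2) ℝ}
    (hA : A ∈ unitBall p 2) {x : ℝ × ℝ} (hx : powSum p x = 1) (hAx : quad A x = 1) :
    ∃ s, A = normalForm p x (app A x) s := by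
  have h := app_tangent_orthogonal hp hA hx hAx
  have hf := spow_dot hp x
  rw [hx] at hf
  have hy : (app A x).1 ^ 2 + (app A x).2 ^ 2 = 1 := hAx
  set u := tangent p x with hu
  have hu1 : u.1 = -(spow x (p - 1)).2 := rfl
  have hu2 : u.2 = (spow x (p - 1)).1 := rfl
  set f := spow x (p - 1) with hfd
  set y := app A x with hyd
  set k := app A u with hkd
  have y1 : y.1 = A 0 0 * x.1 + A 0 1 * x.2 := rfl
  have y2 : y.2 = A 1 0 * x.1 + A 1 1 * x.2 := rfl
  have k1 : k.1 = A 0 0 * -f.2 + A 0 1 * f.1 := by rw [← hu1, ← hu2]; rfl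
  have k2 : k.2 = A 1 0 * -f.2 + A 1 1 * f.1 := by rw [← hu1, ← hu2]; rfl
  have s1 : (y.1 * k.2 - y.2 * k.1) * -y.2 = k.1 := by linear_combination k.1 * hy - y.1 * h
  have s2 : (y.1 * k.2 - y.2 * k.1) * y.1 = k.2 := by linear_combination k.2 * hy - y.2 * h
  refine ⟨y.1 * k.2 - y.2 * k.1, ?_⟩
  generalize y.1 * k.2 - y.2 * k.1 = s at s1 s2
  ext i j
  fin_cases i <;> fin_cases j <;>
    simp [normalForm, tensor, rot, ← hfd]
  · linear_combination -A 0 0 * hf - f.1 * y1 + x.2 * s1 + x.2 * k1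
  · linear_combination -A 0 1 * hf - f.2 * y1 - x.1 * s1 - x.1 * k1
  · linear_combination -A 1 0 * hf - f.1 * y2 + x.2 * s2 + x.2 * k2
  · linear_combination -A 1 1 * hf - f.2 * y2 - x.1 * s2 - x.1 * k2

lemma quad_normalForm (p : ℝ) (x y : ℝ × ℝ) (s : ℝ) (hy : y.1 ^ 2 + y.2 ^ 2 = 1) (z : ℝ × ℝ) :
    quad (normalForm p x y s) z =
      ((spow x (p - 1)).1 * z.1 + (spow x (p - 1)).2 * z.2) ^ 2 +
        s ^ 2 * (x.1 * z.2 - x.2 * z.1) ^ 2 := by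
  generalize hf : spow x (p - 1) = f
  simp only [normalForm, hf, quad, app, tensor, rot, Matrix.add_apply, Matrix.smul_apply,
    smul_eq_mul, Matrix.of_apply, Matrix.cons_val', Matrix.cons_val_zero, Matrix.cons_val_one,
    Matrix.cons_val_fin_one]
  linear_combination ((f.1 * z.1 + f.2 * z.2) ^ 2 + s ^ 2 * (x.1 * z.2 - x.2 * z.1) ^ 2) * hy

lemma quad_normalForm_tangent {p : ℝ} (hp : 1 < p) {x y : ℝ × ℝ} (s : ℝ)
    (hx : powSum p x = 1) (hy : y.1 ^ 2 + y.2 ^ 2 = 1) (t : ℝ) :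
    quad (normalForm p x y s) (x + t • tangent p x) = 1 + s ^ 2 * t ^ 2 := by
  rw [quad_normalForm p x y s hy]
  have hf := spow_dot hp x
  rw [hx] at hf
  simp only [tangent, rot, Prod.fst_add, Prod.snd_add, Prod.smul_fst, Prod.smul_snd, smul_eq_mul]
  generalize spow x (p - 1) = f at hf
  have e1 : f.1 * (x.1 + t * -f.2) + f.2 * (x.2 + t * f.1) = 1 := by linear_combination hf
  have e2 : x.1 * (x.2 + t * f.1) - x.2 * (x.1 + t * -f.2) = t := by linear_combination t * hf
  rw [e1, e2]; ring

lemma bernoulli_rpow {p w N : ℝ} (hp1 : 1 < p) (hp2 : p < 2) (hw : 0 ≤ w)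
    (h : 1 + p / 2 * w ≤ N) : 1 + w ≤ N ^ (2 / p) := by
  have hpw : 0 ≤ p / 2 * w := by positivity
  have h1 := one_add_mul_self_le_rpow_one_add (s := p / 2 * w) (p := 2 / p) (by linarith)
    ((one_le_div (by linarith)).2 hp2.le)
  rw [show 2 / p * (p / 2 * w) = w by field_simp] at h1
  exact h1.trans (Real.rpow_le_rpow (by linarith) h (by positivity))

/-- At a coordinate vector the `ℓ^p` sphere has infinite curvature, so the norm inequality holds
nearby for every parameter. -/
lemma eventually_le_of_axis {p : ℝ} (hp1 : 1 < p) (hp2 : p < 2) {x : ℝ × ℝ} (s : ℝ)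
    (hx : powSum p x = 1) (h0 : x.1 = 0 ∨ x.2 = 0) :
    ∀ᶠ t : ℝ in nhds 0, 1 + s ^ 2 * t ^ 2 ≤ powSum p (x + t • tangent p x) ^ (2 / p) := by
  have hN : ∀ t : ℝ, powSum p (x + t • tangent p x) = 1 + |t| ^ p := by
    intro t
    have one : ∀ a : ℝ, |a| ^ p = 1 → |a| = 1 := fun a ha => by
      rwa [← Real.one_rpow p, Real.rpow_left_inj (abs_nonneg _) zero_le_one (by linarith)] at ha
    have sg : ∀ a : ℝ, |a| = 1 → |Real.sign a| = 1 := fun a ha => by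
      rcases lt_trichotomy a 0 with h | h | h
      · simp [Real.sign_of_neg h]
      · simp [h] at ha
      · simp [Real.sign_of_pos h]
    have z1 : (0 : ℝ) ^ p = 0 := Real.zero_rpow (by linarith)
    have z2 : (0 : ℝ) ^ (p - 1) = 0 := Real.zero_rpow (by linarith)
    rw [powSum] at hx
    rcases h0 with h | h
    · simp only [h, abs_zero, z1, zero_add] at hx
      have hb := one _ hx
      simp [powSum, tangent, rot, spow, h, z2, hb, abs_mul, sg _ hb]
      ring
    · simp only [h, abs_zero, z1, add_zero] at hx
      have hb := one _ hx
      simp [powSum, tangent, rot, spow, h, z2, hb, abs_mul, sg _ hb]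
  have hl : ∀ᶠ t : ℝ in nhds 0, p / 2 * s ^ 2 * |t| ^ (2 - p) < 1 := by
    have : Continuous fun t : ℝ => p / 2 * s ^ 2 * |t| ^ (2 - p) :=
      continuous_const.mul (continuous_abs.rpow_const fun _ => Or.inr (by linarith))
    refine (this.tendsto 0).eventually (gt_mem_nhds ?_)
    simp [Real.zero_rpow (show 2 - p ≠ 0 by linarith)]
  filter_upwards [hl] with t ht
  refine bernoulli_rpow hp1 hp2 (by positivity) ?_
  rw [hN]
  have e : |t| ^ (2 - p) * |t| ^ p = t ^ 2 := by
    rw [← Real.rpow_add_of_nonneg (abs_nonneg _) (by linarith) (by linarith)]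
    simp
  have h1 := mul_le_mul_of_nonneg_right ht.le (show 0 ≤ |t| ^ p by positivity)
  rw [mul_assoc, e] at h1
  linarith

lemma le_one_add_rpow {r w : ℝ} (hr0 : 0 ≤ r) (hr1 : r ≤ 1) (hw : 0 ≤ w) :
    1 + r * w - r * w ^ 2 ≤ (1 + w) ^ r := by
  have h1 : (1 + w) ^ (1 - r) ≤ 1 + (1 - r) * w :=
    rpow_one_add_le_one_add_mul_self (by linarith) (by linarith) (by linarith)
  have h2 : (1 + w) ^ r * (1 + w) ^ (1 - r) = 1 + w := by
    rw [← Real.rpow_add (by linarith)]; simp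
  have h3 : 0 < (1 + w) ^ r := Real.rpow_pos_of_pos (by linarith) _
  have h4 := mul_le_mul_of_nonneg_left h1 h3.le
  rw [h2] at h4
  have h5 : 0 ≤ (1 - r) * w := mul_nonneg (by linarith) hw
  have h6 : 0 ≤ r * w ^ 2 * (r + (1 - r) * w) := by positivity
  refine le_of_mul_le_mul_right (le_trans ?_ h4) (show 0 < 1 + (1 - r) * w by linarith)
  linarith

/-- The substitution `τ = x₁ x₂ t` makes the coordinates of `x + τ u`, for `u` the tangent
direction, simultaneous relative perturbations of those of `x`. -/
lemma powSum_tangent {p : ℝ} (hp : 1 < p) (x : ℝ × ℝ) (t : ℝ) :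
    powSum p (x + (x.1 * x.2 * t) • tangent p x) =
      |x.1| ^ p * |1 + -(|x.2| ^ p * t)| ^ p + |x.2| ^ p * |1 + |x.1| ^ p * t| ^ p := by
  have e1 : (x + (x.1 * x.2 * t) • tangent p x).1 = x.1 * (1 + -(|x.2| ^ p * t)) := by
    rw [← sign_mul_rpow hp x.2]
    simp only [tangent, rot, spow, Prod.fst_add, Prod.smul_fst, smul_eq_mul]; ring
  have e2 : (x + (x.1 * x.2 * t) • tangent p x).2 = x.2 * (1 + |x.1| ^ p * t) := by
    rw [← sign_mul_rpow hp x.1]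
    simp only [tangent, rot, spow, Prod.snd_add, Prod.smul_snd, smul_eq_mul]; ring
  rw [powSum, e1, e2, abs_mul, abs_mul, Real.mul_rpow (abs_nonneg _) (abs_nonneg _),
    Real.mul_rpow (abs_nonneg _) (abs_nonneg _)]

/-- Third-order expansion of `‖·‖_p^p` along the tangent line at a unit vector. -/
lemma powSum_tangent_expansion {p : ℝ} (hp : 1 < p) {x : ℝ × ℝ} (hx : powSum p x = 1) :
    (fun t : ℝ => powSum p (x + (x.1 * x.2 * t) • tangent p x) -
      (1 + p / 2 * ((p - 1) * (|x.1| ^ p * |x.2| ^ p)) * t ^ 2 +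
        p * (p - 1) * (p - 2) / 6 * (|x.1| ^ p * |x.2| ^ p) *
          ((|x.1| ^ p) ^ 2 - (|x.2| ^ p) ^ 2) * t ^ 3)) =O[nhds 0] fun t => t ^ 4 := by
  simp only [powSum_tangent hp]
  rw [powSum] at hx
  generalize |x.1| ^ p = A at *
  generalize |x.2| ^ p = B at *
  have key : ∀ c : ℝ, (fun t : ℝ => |1 + c * t| ^ p -
      (1 + p * (c * t) + p * (p - 1) / 2 * (c * t) ^ 2 +
        p * (p - 1) * (p - 2) / 6 * (c * t) ^ 3)) =O[nhds 0] fun t => t ^ 4 := fun c => by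
    have hc : Filter.Tendsto (fun t : ℝ => c * t) (nhds 0) (nhds 0) := by
      have : Continuous fun t : ℝ => c * t := by fun_prop
      simpa using this.tendsto 0
    have h1 := (taylor3 p).comp_tendsto hc
    have h2 : (fun t : ℝ => (c * t) ^ 4) =O[nhds 0] fun t => t ^ 4 := by
      simp only [mul_pow]
      exact Asymptotics.isBigO_const_mul_self _ _ _
    refine (h1.trans h2).congr' ?_ Filter.EventuallyEq.rfl
    filter_upwards [hc.eventually (lt_mem_nhds (show (-1 : ℝ) < 0 by norm_num))] with t ht
    rw [Function.comp_apply, abs_of_pos (by linarith)]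
  have h := ((key (-B)).const_mul_left A).add ((key A).const_mul_left B)
  refine h.congr_left fun t => ?_
  obtain rfl : B = 1 - A := by linarith
  rw [neg_mul]
  ring

lemma leading_coeff_nonneg {c k C : ℝ}
    (h : ∀ᶠ t : ℝ in nhds 0, 0 ≤ c * t ^ 2 + k * t ^ 3 + C * t ^ 4) :
    0 ≤ c ∧ (c = 0 → k = 0) := by
  have lim : ∀ k C : ℝ, Filter.Tendsto (fun t : ℝ => k + C * t) (nhds 0) (nhds k) := fun k C => by
    have : Continuous fun t : ℝ => k + C * t := by fun_prop
    simpa using this.tendsto 0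
  constructor
  · have l : Filter.Tendsto (fun t : ℝ => c + k * t + C * t ^ 2) (nhdsWithin 0 (Set.Ioi 0))
        (nhds c) := by
      have : Continuous fun t : ℝ => c + k * t + C * t ^ 2 := by fun_prop
      simpa using (this.tendsto 0).mono_left nhdsWithin_le_nhds
    refine ge_of_tendsto l ?_
    filter_upwards [nhdsWithin_le_nhds h, self_mem_nhdsWithin] with t ht ht0
    have ht0 : 0 < t := ht0
    refine nonneg_of_mul_nonneg_right (b := c + k * t + C * t ^ 2) (a := t ^ 2) ?_ (by positivity)
    linarith
  · rintro rfl
    refine le_antisymm ?_ ?_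
    · refine le_of_tendsto ((lim k C).mono_left (nhdsWithin_le_nhds (s := Set.Iio 0))) ?_
      filter_upwards [nhdsWithin_le_nhds h, self_mem_nhdsWithin] with t ht ht0
      have ht0 : t < 0 := ht0
      have : 0 < -t ^ 3 := by
        have := pow_pos (neg_pos.2 ht0) 3
        linarith
      refine nonpos_of_mul_nonpos_right (b := k + C * t) (a := -t ^ 3) ?_ this
      linarith
    · refine ge_of_tendsto ((lim k C).mono_left (nhdsWithin_le_nhds (s := Set.Ioi 0))) ?_
      filter_upwards [nhdsWithin_le_nhds h, self_mem_nhdsWithin] with t ht ht0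
      have ht0 : 0 < t := ht0
      refine nonneg_of_mul_nonneg_right (b := k + C * t) (a := t ^ 3) ?_ (by positivity)
      linarith

/-- Second- and third-order optimality at `x`: the curvature of the `ℓ^p` sphere bounds `s`,
and when the bound is attained the cubic term has to vanish, which places `x` on a diagonal. -/
lemma normalForm_mem_ball_bound {p : ℝ} (hp1 : 1 < p) (hp2 : p < 2) {x y : ℝ × ℝ} {s : ℝ}
    (hx : powSum p x = 1) (hx1 : x.1 ≠ 0) (hx2 : x.2 ≠ 0) (hy : y.1 ^ 2 + y.2 ^ 2 = 1)
    (hT : normalForm p x y s ∈ unitBall p 2) :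
    s ^ 2 * (x.1 * x.2) ^ 2 ≤ (p - 1) * (|x.1| ^ p * |x.2| ^ p) ∧
      (s ^ 2 * (x.1 * x.2) ^ 2 = (p - 1) * (|x.1| ^ p * |x.2| ^ p) → |x.1| ^ p = |x.2| ^ p) := by
  have hE := powSum_tangent_expansion hp1 hx
  have hA : 0 < |x.1| ^ p := Real.rpow_pos_of_pos (abs_pos.2 hx1) _
  have hB : 0 < |x.2| ^ p := Real.rpow_pos_of_pos (abs_pos.2 hx2) _
  set A := |x.1| ^ p
  set B := |x.2| ^ p
  set q := s ^ 2 * (x.1 * x.2) ^ 2 with hq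
  obtain ⟨C, hC⟩ := hE.bound
  have hk : ∀ᶠ t : ℝ in nhds 0, 0 ≤ p / 2 * ((p - 1) * (A * B) - q) * t ^ 2 +
      p * (p - 1) * (p - 2) / 6 * (A * B) * (A ^ 2 - B ^ 2) * t ^ 3 +
      (C + p / 2 * q ^ 2) * t ^ 4 := by
    filter_upwards [hC] with t ht
    rw [Real.norm_eq_abs, Real.norm_eq_abs, abs_of_nonneg (show (0 : ℝ) ≤ t ^ 4 by positivity)] at ht
    have h1 := (abs_le.1 ht).2
    have h2 := quad_rpow_le hp1 hT (x + (x.1 * x.2 * t) • tangent p x)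
    rw [quad_normalForm_tangent hp1 s hx hy,
      show s ^ 2 * (x.1 * x.2 * t) ^ 2 = q * t ^ 2 by rw [hq]; ring] at h2
    have h3 := le_one_add_rpow (r := p / 2) (w := q * t ^ 2) (by linarith) (by linarith)
      (by positivity)
    linarith
  obtain ⟨h1, h2⟩ := leading_coeff_nonneg hk
  constructor
  · have := nonneg_of_mul_nonneg_right h1 (show 0 < p / 2 by linarith)
    linarith
  · intro he
    have h3 := h2 (by rw [he]; ring)
    have h4 : p * (p - 1) * (p - 2) / 6 * (A * B) ≠ 0 := by
      have : p * (p - 1) * (p - 2) ≠ 0 :=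
        mul_ne_zero (mul_ne_zero (by linarith) (by linarith)) (by linarith)
      have := (mul_pos hA hB).ne'
      positivity
    have h5 := (mul_eq_zero.1 h3).resolve_left h4
    nlinarith

/-- If `s` satisfies the curvature bound strictly, then the norm inequality for the parameter `s`
holds near `x`. -/
lemma eventually_le_of_lt {p : ℝ} (hp1 : 1 < p) (hp2 : p < 2) {x : ℝ × ℝ} {s : ℝ}
    (hx : powSum p x = 1) (hx1 : x.1 ≠ 0) (hx2 : x.2 ≠ 0)
    (hs : s ^ 2 * (x.1 * x.2) ^ 2 < (p - 1) * (|x.1| ^ p * |x.2| ^ p)) :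
    ∀ᶠ t : ℝ in nhds 0, 1 + s ^ 2 * t ^ 2 ≤ powSum p (x + t • tangent p x) ^ (2 / p) := by
  have hE := powSum_tangent_expansion hp1 hx
  have h0 : x.1 * x.2 ≠ 0 := mul_ne_zero hx1 hx2
  suffices h : ∀ᶠ t : ℝ in nhds 0, 1 + s ^ 2 * (x.1 * x.2 * t) ^ 2 ≤
      powSum p (x + (x.1 * x.2 * t) • tangent p x) ^ (2 / p) by
    have hc : Filter.Tendsto (fun t : ℝ => t / (x.1 * x.2)) (nhds 0) (nhds 0) := by
      have : Continuous fun t : ℝ => t / (x.1 * x.2) := by fun_prop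
      simpa using this.tendsto 0
    filter_upwards [hc.eventually h] with t ht
    rwa [mul_div_cancel₀ _ h0] at ht
  set A := |x.1| ^ p
  set B := |x.2| ^ p
  set q := s ^ 2 * (x.1 * x.2) ^ 2 with hq
  obtain ⟨C, hC⟩ := hE.bound
  set k := p * (p - 1) * (p - 2) / 6 * (A * B) * (A ^ 2 - B ^ 2)
  have hl : ∀ᶠ t : ℝ in nhds 0, 0 < p / 2 * ((p - 1) * (A * B) - q) + k * t - C * t ^ 2 := by
    have : Continuous fun t : ℝ => p / 2 * ((p - 1) * (A * B) - q) + k * t - C * t ^ 2 := by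
      fun_prop
    refine (this.tendsto 0).eventually (lt_mem_nhds ?_)
    have : 0 < p / 2 * ((p - 1) * (A * B) - q) := mul_pos (by linarith) (by linarith)
    simpa using this
  filter_upwards [hC, hl] with t ht hlt
  rw [Real.norm_eq_abs, Real.norm_eq_abs, abs_of_nonneg (show (0 : ℝ) ≤ t ^ 4 by positivity)] at ht
  have h1 := (abs_le.1 ht).1
  have h2 := mul_nonneg hlt.le (sq_nonneg t)
  rw [show s ^ 2 * (x.1 * x.2 * t) ^ 2 = q * t ^ 2 by rw [hq]; ring]
  have hq0 : 0 ≤ q * t ^ 2 := by positivity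
  have h3 : 1 + p / 2 * (q * t ^ 2) ≤ powSum p (x + (x.1 * x.2 * t) • tangent p x) := by
    linarith
  exact bernoulli_rpow hp1 hp2 hq0 h3

/-! ### Enlarging the parameter and the characterization -/

/-- If the norm is attained only at `±x` and the norm inequality holds near `x` for some larger
parameter, then by compactness the parameter can be enlarged inside the unit ball. -/
lemma exists_larger_param {p : ℝ} (hp : 1 < p) {x y : ℝ × ℝ} {s s₁ : ℝ}
    (hx : powSum p x = 1) (hy : y.1 ^ 2 + y.2 ^ 2 = 1)
    (hT : normalForm p x y s ∈ unitBall p 2)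
    (hna : ∀ z, powSum p z = 1 → x.1 * z.2 - x.2 * z.1 ≠ 0 → quad (normalForm p x y s) z ≠ 1)
    (hs : |s| < s₁)
    (hloc : ∀ᶠ t : ℝ in nhds 0, 1 + s₁ ^ 2 * t ^ 2 ≤ powSum p (x + t • tangent p x) ^ (2 / p)) :
    ∃ s₂, |s| < s₂ ∧ normalForm p x y s₂ ∈ unitBall p 2 := by
  have hs1 : 0 < s₁ := (abs_nonneg s).trans_lt hs
  have hss : s ^ 2 < s₁ ^ 2 := sq_lt_sq.2 (by rwa [abs_of_pos hs1])
  obtain ⟨δ, hδ, hloc⟩ := Metric.eventually_nhds_iff.1 hloc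
  have hball := (mem_ball_iff hp _).1 hT
  simp only [quad_normalForm p x y s hy] at hball hna
  simp only [mem_ball_iff hp, quad_normalForm p x y _ hy]
  have hf := spow_dot hp x
  rw [hx] at hf
  -- unit vectors `z` with `|⟨x^o, z⟩| < d` that could violate the bound for some parameter at most
  -- `s₁` are multiples of `x + t u` with `|t| < δ`
  set d := min (δ / 2) (1 / (2 * s₁)) with hd
  have hd0 : 0 < d := by positivity
  have hd1 : d ≤ δ / 2 := min_le_left _ _
  have hd2 : s₁ * d ≤ 1 / 2 := by
    have := mul_le_mul_of_nonneg_left (min_le_right (δ / 2) (1 / (2 * s₁))) hs1.le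
    rwa [show s₁ * (1 / (2 * s₁)) = 1 / 2 by field_simp] at this
  -- `m` is a uniform gap in the norm inequality away from the direction of `x`
  obtain ⟨m, hm, hK⟩ : ∃ m > 0, ∀ z, powSum p z = 1 → d ≤ |x.1 * z.2 - x.2 * z.1| →
      m * (x.1 * z.2 - x.2 * z.1) ^ 2 ≤
        1 - (((spow x (p - 1)).1 * z.1 + (spow x (p - 1)).2 * z.2) ^ 2 +
        s ^ 2 * (x.1 * z.2 - x.2 * z.1) ^ 2) := by
    set K := {z : ℝ × ℝ | powSum p z = 1} ∩ {z | d ≤ |x.1 * z.2 - x.2 * z.1|} with hKdef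
    have hKc : IsCompact K :=
      (isCompact_powSum_sphere hp).inter_right (isClosed_le continuous_const (by fun_prop))
    have hne : ∀ z ∈ K, x.1 * z.2 - x.2 * z.1 ≠ 0 := fun z hz h => by
      have := hz.2
      simp only [Set.mem_ofPred_eq, h, abs_zero] at this
      linarith
    rcases K.eq_empty_or_nonempty with hE | hN
    · refine ⟨1, one_pos, fun z h1 h2 => ?_⟩
      have : z ∈ K := ⟨h1, h2⟩
      rw [hE] at this
      exact this.elim
    · have hcont : ContinuousOn (fun z : ℝ × ℝ =>
          (1 - (((spow x (p - 1)).1 * z.1 + (spow x (p - 1)).2 * z.2) ^ 2 +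
          s ^ 2 * (x.1 * z.2 - x.2 * z.1) ^ 2)) / (x.1 * z.2 - x.2 * z.1) ^ 2) K :=
        ContinuousOn.div (by fun_prop) (by fun_prop) fun z hz => pow_ne_zero 2 (hne z hz)
      obtain ⟨z₀, hz₀, hmin⟩ := hKc.exists_isMinOn hN hcont
      have hgap := sub_pos.2 (lt_of_le_of_ne (hball z₀ hz₀.1) (hna z₀ hz₀.1 (hne z₀ hz₀)))
      have hpos : ∀ z ∈ K, 0 < (x.1 * z.2 - x.2 * z.1) ^ 2 := fun z hz =>
        pow_pos (abs_pos.2 (hne z hz)) 2 |>.trans_eq (sq_abs _)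
      refine ⟨_, div_pos hgap (hpos z₀ hz₀), fun z h1 h2 => ?_⟩
      have hz : z ∈ K := ⟨h1, h2⟩
      exact (le_div_iff₀ (hpos z hz)).1 (hmin hz)
  set r := min (s₁ ^ 2) (s ^ 2 + m) with hr
  have hrs : s ^ 2 < r := lt_min hss (by linarith)
  have hr0 : 0 ≤ r := (sq_nonneg s).trans hrs.le
  refine ⟨Real.sqrt r, ?_, fun z hz => ?_⟩
  · rw [← Real.sqrt_sq_eq_abs]
    exact Real.sqrt_lt_sqrt (sq_nonneg s) hrs
  rw [Real.sq_sqrt hr0]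
  have hb0 := hball z hz
  rcases le_or_gt d |x.1 * z.2 - x.2 * z.1| with h | h
  · have h1 := hK z hz h
    have h2 := mul_le_mul_of_nonneg_right (min_le_right (s₁ ^ 2) (s ^ 2 + m))
      (sq_nonneg (x.1 * z.2 - x.2 * z.1))
    linarith
  · have h2 := mul_le_mul_of_nonneg_right (min_le_left (s₁ ^ 2) (s ^ 2 + m))
      (sq_nonneg (x.1 * z.2 - x.2 * z.1))
    by_contra! hcon
    set β := x.1 * z.2 - x.2 * z.1 with hβ
    set α := (spow x (p - 1)).1 * z.1 + (spow x (p - 1)).2 * z.2 with hα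
    have hb2 : s₁ ^ 2 * β ^ 2 ≤ 1 / 4 := by
      have h3 : s₁ * |β| ≤ 1 / 2 := (mul_le_mul_of_nonneg_left h.le hs1.le).trans hd2
      have h4 : (s₁ * |β|) ^ 2 ≤ (1 / 2) ^ 2 := pow_le_pow_left₀ (by positivity) h3 2
      rw [mul_pow, sq_abs] at h4
      linarith
    have hα2 : 1 / 2 < |α| := by
      by_contra! h5
      have h6 : |α| ^ 2 ≤ (1 / 2) ^ 2 := pow_le_pow_left₀ (abs_nonneg _) h5 2
      rw [sq_abs] at h6
      linarith
    have hα0 : α ≠ 0 := abs_pos.1 (by linarith)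
    have hτ : |β / α| < δ := by
      rw [abs_div, div_lt_iff₀ (by linarith)]
      have := mul_lt_mul_of_pos_left hα2 hδ
      linarith
    have hzx : z = α • (x + (β / α) • tangent p x) := by
      have e : α • (x + (β / α) • tangent p x) = α • x + β • tangent p x := by
        rw [smul_add, smul_smul, mul_div_cancel₀ _ hα0]
      rw [e, hα, hβ]
      refine Prod.ext ?_ ?_
      · simp only [tangent, rot, Prod.fst_add, Prod.smul_fst, smul_eq_mul]
        linear_combination -z.1 * hf
      · simp only [tangent, rot, Prod.snd_add, Prod.smul_snd, smul_eq_mul]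
        linear_combination -z.2 * hf
    have h7 := hloc (y := β / α) (by rwa [Real.dist_eq, sub_zero])
    have h8 : α ^ 2 * powSum p (x + (β / α) • tangent p x) ^ (2 / p) = 1 := by
      have h9 := congrArg (fun w => powSum p w ^ (2 / p)) hzx
      simp only [powSum_smul, hz, Real.one_rpow] at h9
      rw [Real.mul_rpow (by positivity) (powSum_nonneg _ _), ← Real.rpow_mul (abs_nonneg _),
        mul_div_cancel₀ _ (by linarith)] at h9
      rw [h9]
      norm_cast
      rw [sq_abs]
    have h10 := mul_le_mul_of_nonneg_left h7 (sq_nonneg α)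
    rw [h8, show α ^ 2 * (1 + s₁ ^ 2 * (β / α) ^ 2) = α ^ 2 + s₁ ^ 2 * β ^ 2 by
      field_simp] at h10
    linarith

lemma normalForm_convexComb (p : ℝ) (x y : ℝ × ℝ) {a b : ℝ} (hab : a + b = 1) (s t : ℝ) :
    a • normalForm p x y s + b • normalForm p x y t = normalForm p x y (a * s + b * t) := by
  obtain rfl : b = 1 - a := by linarith
  simp only [normalForm]
  module

lemma normalForm_injective {p : ℝ} (hp : 1 < p) {x y : ℝ × ℝ} {s t : ℝ}
    (hx : powSum p x = 1) (hy : y.1 ^ 2 + y.2 ^ 2 = 1)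
    (h : normalForm p x y s = normalForm p x y t) : s = t := by
  have hf := spow_dot hp x
  rw [hx] at hf
  have e : ∀ i j, s * tensor (rot x) (rot y) i j = t * tensor (rot x) (rot y) i j := fun i j => by
    have := congrFun (congrFun h i) j
    simpa [normalForm] using this
  have e1 := e 0 0
  have e2 := e 0 1
  have e3 := e 1 0
  have e4 := e 1 1
  simp only [tensor, rot, Matrix.of_apply, Matrix.cons_val', Matrix.cons_val_zero,
    Matrix.cons_val_one, Matrix.cons_val_fin_one] at e1 e2 e3 e4
  generalize spow x (p - 1) = f at hf
  have g1 : (s - t) * (y.1 ^ 2 + y.2 ^ 2) * (f.1 * x.1 + f.2 * x.2) = 0 := by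
    linear_combination y.2 * f.2 * e1 - y.2 * f.1 * e2 - y.1 * f.2 * e3 + y.1 * f.1 * e4
  rw [hy, hf] at g1
  linarith

/-- The constant in the theorem is the curvature bound at a diagonal vector. -/
lemma diag_const {p : ℝ} (hp : 1 < p) {x : ℝ × ℝ} (h1 : |x.1| ^ p = 1 / 2)
    (h2 : |x.2| ^ p = 1 / 2) :
    (Real.sqrt (p - 1) * (2 : ℝ) ^ ((2 - p) / p)) ^ 2 * (x.1 * x.2) ^ 2 =
      (p - 1) * (|x.1| ^ p * |x.2| ^ p) := by
  have e : ∀ a : ℝ, |a| ^ p = 1 / 2 → |a| = (2 : ℝ) ^ (-(1 / p)) := fun a ha => by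
    rw [Real.rpow_neg (by norm_num), ← Real.inv_rpow (by norm_num), ← one_div (2 : ℝ), ← ha,
      ← Real.rpow_mul (abs_nonneg _), mul_one_div_cancel (by linarith), Real.rpow_one]
  rw [mul_pow, Real.sq_sqrt (by linarith), ← sq_abs (x.1 * x.2), abs_mul, e _ h1, e _ h2,
    mul_assoc, ← mul_pow, ← Real.rpow_add (by norm_num), ← Real.rpow_add (by norm_num),
    show (2 - p) / p + (-(1 / p) + -(1 / p)) = -1 by field_simp; ring]
  rw [← Real.rpow_mul (by norm_num),
    show -(1 / p) * p = -1 by field_simp, Real.rpow_neg_one]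
  norm_num

/-- An operator attaining its norm on two independent vectors is extreme, by strict convexity
of the Euclidean norm. -/
lemma extreme_of_two {p : ℝ} (hp : 1 < p) {T : Matrix (Fin 2) (Fin 2) ℝ}
    (hT : T ∈ unitBall p 2) {z w : ℝ × ℝ} (hzw : LinearIndependent ℝ ![z, w])
    (hz : quad T z = powSum p z ^ (2 / p)) (hw : quad T w = powSum p w ^ (2 / p)) :
    T ∈ Set.extremePoints ℝ (unitBall p 2) := by
  rw [mem_extremePoints_iff_left]
  refine ⟨hT, ?_⟩
  rintro A hA B hB ⟨a, b, ha, hb, hab, rfl⟩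
  have e1 := app_eq_of_convexComb ha hb hab (quad_le hp hA z) (quad_le hp hB z) hz
  have e2 := app_eq_of_convexComb ha hb hab (quad_le hp hA w) (quad_le hp hB w) hw
  obtain rfl := eq_of_app_eq (linearIndependent_pair.1 hzw) e1 e2
  rw [← add_smul, hab, one_smul]

/-- The exceptional operators are extreme: by strict convexity a decomposition of such a `T`
consists of operators in normal form at `x`, whose parameters cannot exceed that of `T`. -/
lemma extreme_of_diag {p : ℝ} (hp1 : 1 < p) (hp2 : p < 2) {x y : ℝ × ℝ} {s : ℝ}
    (hT : normalForm p x y s ∈ unitBall p 2) (h1 : |x.1| ^ p = 1 / 2) (h2 : |x.2| ^ p = 1 / 2)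
    (hy : y.1 ^ 2 + y.2 ^ 2 = 1)
    (hs : s ^ 2 = (Real.sqrt (p - 1) * (2 : ℝ) ^ ((2 - p) / p)) ^ 2) :
    normalForm p x y s ∈ Set.extremePoints ℝ (unitBall p 2) := by
  have hx : powSum p x = 1 := by rw [powSum, h1, h2]; norm_num
  have ne : ∀ a : ℝ, |a| ^ p = 1 / 2 → a ≠ 0 := by
    rintro a ha rfl
    rw [abs_zero, Real.zero_rpow (by linarith)] at ha
    norm_num at ha
  have hx1 := ne _ h1
  have hx2 := ne _ h2
  have hf := spow_dot hp1 x
  rw [hx] at hf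
  have happ : app (normalForm p x y s) x = y := by
    generalize hfd : spow x (p - 1) = f at hf
    refine Prod.ext ?_ ?_
    · simp [app, normalForm, tensor, rot, hfd]
      linear_combination y.1 * hf
    · simp [app, normalForm, tensor, rot, hfd]
      linear_combination y.2 * hf
  have hq : quad (normalForm p x y s) x = 1 := by rw [quad, happ, hy]
  have hbound : ∀ s', normalForm p x y s' ∈ unitBall p 2 → |s'| ≤ |s| := fun s' h' => by
    have := (normalForm_mem_ball_bound hp1 hp2 hx hx1 hx2 hy h').1
    rw [← diag_const hp1 h1 h2, ← hs] at this
    exact sq_le_sq.1 (le_of_mul_le_mul_right this (by positivity))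
  rw [mem_extremePoints_iff_left]
  refine ⟨hT, ?_⟩
  rintro A hA B hB ⟨a, b, ha, hb, hab, hABT⟩
  have hAB : app A x = app B x :=
    app_eq_of_convexComb ha hb hab ((mem_ball_iff hp1 A).1 hA x hx)
      ((mem_ball_iff hp1 B).1 hB x hx) (by rw [hABT, hq])
  have hAy : app A x = y := by
    rw [← happ, ← hABT]
    simp only [app, Prod.mk.injEq] at hAB
    obtain rfl : b = 1 - a := by linarith
    refine Prod.ext ?_ ?_
    · simp only [app, Matrix.add_apply, Matrix.smul_apply, smul_eq_mul]
      linear_combination (1 - a) * hAB.1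
    · simp only [app, Matrix.add_apply, Matrix.smul_apply, smul_eq_mul]
      linear_combination (1 - a) * hAB.2
  have hBy : app B x = y := hAB.symm.trans hAy
  obtain ⟨s', hs'⟩ := exists_eq_normalForm hp1 hA hx (by rw [quad, hAy, hy])
  obtain ⟨t', ht'⟩ := exists_eq_normalForm hp1 hB hx (by rw [quad, hBy, hy])
  rw [hAy] at hs'
  rw [hBy] at ht'
  subst hs' ht'
  rw [normalForm_convexComb p x y hab] at hABT
  have hst := normalForm_injective hp1 hx hy hABT
  have b1 := hbound _ hA
  have b2 := hbound _ hB
  have hss : s' = s := by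
    obtain rfl : b = 1 - a := by linarith
    have c1 := abs_le.1 b1
    have c2 := abs_le.1 b2
    rcases abs_cases s with h | h <;> nlinarith
  rw [hss]

/-- An extreme contraction attaining its norm only in one direction is exceptional. -/
lemma diag_of_extreme {p : ℝ} (hp1 : 1 < p) (hp2 : p < 2) {x y : ℝ × ℝ} {s : ℝ}
    (hx : powSum p x = 1) (hy : y.1 ^ 2 + y.2 ^ 2 = 1)
    (hT : normalForm p x y s ∈ Set.extremePoints ℝ (unitBall p 2))
    (hna : ∀ z, powSum p z = 1 → x.1 * z.2 - x.2 * z.1 ≠ 0 → quad (normalForm p x y s) z ≠ 1) :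
    |x.1| ^ p = 1 / 2 ∧ |x.2| ^ p = 1 / 2 ∧
      s ^ 2 = (Real.sqrt (p - 1) * (2 : ℝ) ^ ((2 - p) / p)) ^ 2 := by
  rw [mem_extremePoints_iff_left] at hT
  obtain ⟨hT, hext⟩ := hT
  have hno : ∀ s₁, |s| < s₁ → ¬ ∀ᶠ t : ℝ in nhds 0,
      1 + s₁ ^ 2 * t ^ 2 ≤ powSum p (x + t • tangent p x) ^ (2 / p) := by
    intro s₁ h1 h2
    obtain ⟨s₂, hs₂, hmem⟩ := exists_larger_param hp1 hx hy hT hna h1 h2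
    have hneg : normalForm p x y (-s₂) ∈ unitBall p 2 := by
      rw [mem_ball_iff hp1] at hmem ⊢
      intro z hz
      have := hmem z hz
      rwa [quad_normalForm p x y _ hy, neg_sq, ← quad_normalForm p x y _ hy]
    have hs0 : 0 < s₂ := (abs_nonneg s).trans_lt hs₂
    obtain ⟨l1, l2⟩ := abs_lt.1 hs₂
    have := hext _ hmem _ hneg ⟨(s₂ + s) / (2 * s₂), (s₂ - s) / (2 * s₂),
      div_pos (by linarith) (by linarith), div_pos (by linarith) (by linarith),
      by field_simp; ring, by
        rw [normalForm_convexComb p x y (by field_simp; ring)]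
        congr 1
        field_simp
        ring⟩
    have := normalForm_injective hp1 hx hy this
    linarith
  have hx1 : x.1 ≠ 0 := fun h =>
    hno (|s| + 1) (by linarith) (eventually_le_of_axis hp1 hp2 _ hx (Or.inl h))
  have hx2 : x.2 ≠ 0 := fun h =>
    hno (|s| + 1) (by linarith) (eventually_le_of_axis hp1 hp2 _ hx (Or.inr h))
  obtain ⟨hle, heq⟩ := normalForm_mem_ball_bound hp1 hp2 hx hx1 hx2 hy hT
  have hs : s ^ 2 * (x.1 * x.2) ^ 2 = (p - 1) * (|x.1| ^ p * |x.2| ^ p) := by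
    refine hle.eq_of_not_lt fun hlt => ?_
    -- a strict inequality survives a small increase of the parameter
    have hc : Continuous fun r : ℝ => r ^ 2 * (x.1 * x.2) ^ 2 := by fun_prop
    have hev := (hc.tendsto |s|).eventually (gt_mem_nhds (by simpa only [sq_abs] using hlt))
    have hev' := (hev.filter_mono (nhdsWithin_le_nhds (s := Set.Ioi |s|))).and self_mem_nhdsWithin
    obtain ⟨s₁, h1, h2⟩ := hev'.exists
    exact hno s₁ h2 (eventually_le_of_lt hp1 hp2 hx hx1 hx2 h1)
  have hAB := heq hs
  have hsum : |x.1| ^ p + |x.2| ^ p = 1 := hx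
  have h1 : |x.1| ^ p = 1 / 2 := by linarith
  have h2 : |x.2| ^ p = 1 / 2 := by linarith
  refine ⟨h1, h2, ?_⟩
  rw [← diag_const hp1 h1 h2] at hs
  exact mul_right_cancel₀ (pow_ne_zero 2 (mul_ne_zero hx1 hx2)) hs

/-- Extreme contractions from ℓ^p_2 to ℓ²_2 for 1 < p < 2. -/
theorem stmt_5 (p : ℝ) (hp1 : 1 < p) (hp2 : p < 2) (T : Matrix (Fin 2) (Fin 2) ℝ)
    (hT : opNorm p 2 T = 1) :
    T ∈ Set.extremePoints ℝ (unitBall p 2) ↔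
      ((∃ z w : ℝ × ℝ, LinearIndependent ℝ ![z, w] ∧
          pnorm 2 (app T z) = pnorm p z ∧ pnorm 2 (app T w) = pnorm p w) ∨
       (∃ (x y : ℝ × ℝ) (s : ℝ),
          |x.1| ^ p = 1 / 2 ∧ |x.2| ^ p = 1 / 2 ∧ pnorm 2 y = 1 ∧
          (s = Real.sqrt (p - 1) * (2 : ℝ) ^ ((2 - p) / p) ∨
           s = -(Real.sqrt (p - 1) * (2 : ℝ) ^ ((2 - p) / p))) ∧
          T = tensor (spow x (p - 1)) y + s • tensor (rot x) (rot y))) := by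
  have hTb : T ∈ unitBall p 2 := hT.le
  simp only [pnorm_two_app_eq_iff]
  constructor
  · intro hext
    refine or_iff_not_imp_left.2 fun hna => ?_
    obtain ⟨x, hx, hTx⟩ := exists_attain hp1 hT
    obtain ⟨s, hs⟩ := exists_eq_normalForm hp1 hTb hx hTx
    have hy : (app T x).1 ^ 2 + (app T x).2 ^ 2 = 1 := hTx
    generalize app T x = y at hs hy
    subst hs
    obtain ⟨h1, h2, h3⟩ := diag_of_extreme hp1 hp2 hx hy hext fun z hz hne hq =>
      hna ⟨x, z, linearIndependent_pair.2 hne, by rw [hx, Real.one_rpow, hTx],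
        by rw [hz, Real.one_rpow, hq]⟩
    refine ⟨x, y, s, h1, h2, ?_, sq_eq_sq_iff_eq_or_eq_neg.1 h3, rfl⟩
    rw [← pow_eq_one_iff_of_nonneg (pnorm_nonneg _ _) two_ne_zero, pnorm_two_sq, hy]
  · rintro (⟨z, w, hzw, hz, hw⟩ | ⟨x, y, s, h1, h2, hy, hs, rfl⟩)
    · exact extreme_of_two hp1 hTb hzw hz hw
    · exact extreme_of_diag hp1 hp2 hTb h1 h2 (by rw [← pnorm_two_sq, hy, one_pow])
        (sq_eq_sq_iff_eq_or_eq_neg.2 hs)
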